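/- arXiv:2311.00992 — 2 statements merged into one kernel-verified Lean document; each statement's English description precedes it below -/
import Mathlib

section
/- For every positive integer n with n ∉ {2, 3, 6}, there exists a self-orthogonal Latin square of order n, i.e., a Latin square A of order n such that A and its transpose Aᵀ are orthogonal. -/
/-- A Latin square of order `n`: each symbol occurs exactly once in each row
and exactly once in each column. -/
def IsLatinSquare {n : ℕ} (A : Fin n → Fin n → Fin n) : Prop :=
  (∀ i, Function.Bijective fun j => A i j) ∧ (∀ j, Function.Bijective fun i => A i j)

/-- Two Latin squares are orthogonal: every ordered pair of symbols occurs
exactly once among the superimposed pairs. -/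
def IsOrthogonal {n : ℕ} (A B : Fin n → Fin n → Fin n) : Prop :=
  ∀ p : Fin n × Fin n, ∃! q : Fin n × Fin n, (A q.1 q.2, B q.1 q.2) = p

/-- `A` is a self-orthogonal Latin square on `α`, in injectivity form. -/
structure SO {α : Type} (A : α → α → α) : Prop where
  row : ∀ x y y', A x y = A x y' → y = y'
  col : ∀ x x' y, A x y = A x' y → x = x'
  orth : ∀ x y x' y', A x y = A x' y' → A y x = A y' x' → x = x' ∧ y = y'

/-- There is a self-orthogonal Latin square on the type `α`. -/
def HasSO (α : Type) : Prop := ∃ A : α → α → α, SO A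

theorem HasSO.equiv {α β : Type} (e : α ≃ β) (h : HasSO α) : HasSO β := by
  obtain ⟨A, hA⟩ := h
  refine ⟨fun x y => e (A (e.symm x) (e.symm y)), ?_, ?_, ?_⟩
  · intro x y y' h
    exact e.symm.injective (hA.row _ _ _ (e.injective h))
  · intro x y y' h
    exact e.symm.injective (hA.col _ _ _ (e.injective h))
  · intro x y x' y' h h'
    have := hA.orth _ _ _ _ (e.injective h) (e.injective h')
    exact ⟨e.symm.injective this.1, e.symm.injective this.2⟩

theorem HasSO.idem {α : Type} [Finite α] (h : HasSO α) :
    ∃ A : α → α → α, SO A ∧ ∀ x, A x x = x := by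
  obtain ⟨A, hA⟩ := h
  have hinj : Function.Injective (fun x => A x x) := fun x y h => (hA.orth x x y y h h).1
  let σ := Equiv.ofBijective _ (Finite.injective_iff_bijective.1 hinj)
  refine ⟨fun x y => σ.symm (A x y), ⟨?_, ?_, ?_⟩, ?_⟩
  · intro x y y' h
    exact hA.row _ _ _ (σ.symm.injective h)
  · intro x y y' h
    exact hA.col _ _ _ (σ.symm.injective h)
  · intro x y x' y' h h'
    exact hA.orth _ _ _ _ (σ.symm.injective h) (σ.symm.injective h')
  · intro x
    exact σ.symm_apply_apply x

/-- Pairwise balanced designs: if every block carries a self-orthogonal Latin square, so does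
the set of points. -/
theorem HasSO.pbd {P I : Type} [Finite P] (B : I → Set P)
    (hex : ∀ x y : P, x ≠ y → ∃ i, x ∈ B i ∧ y ∈ B i)
    (huniq : ∀ x y : P, x ≠ y → ∀ i j, x ∈ B i → y ∈ B i → x ∈ B j → y ∈ B j → i = j)
    (hB : ∀ i, HasSO (B i)) : HasSO P := by
  classical
  have key : ∀ i, ∃ A : P → P → P, (∀ x ∈ B i, ∀ y ∈ B i, A x y ∈ B i) ∧
      (∀ x ∈ B i, A x x = x) ∧
      (∀ x ∈ B i, ∀ y ∈ B i, ∀ y' ∈ B i, A x y = A x y' → y = y') ∧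
      (∀ x ∈ B i, ∀ x' ∈ B i, ∀ y ∈ B i, A x y = A x' y → x = x') ∧
      (∀ x ∈ B i, ∀ y ∈ B i, ∀ x' ∈ B i, ∀ y' ∈ B i, A x y = A x' y' → A y x = A y' x' →
        x = x' ∧ y = y') := by
    intro i
    obtain ⟨A, hA, hid⟩ := (hB i).idem
    refine ⟨fun x y => if h : x ∈ B i ∧ y ∈ B i then (A ⟨x, h.1⟩ ⟨y, h.2⟩ : P) else x,
      ?_, ?_, ?_, ?_, ?_⟩
    · intro x hx y hy
      simp [hx, hy]
    · intro x hx
      simp [hx, hid]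
    · intro x hx y hy y' hy' h
      simp only [hx, hy, hy', and_self, dite_true] at h
      simpa using hA.row _ _ _ (Subtype.ext h)
    · intro x hx y hy y' hy' h
      simp only [hx, hy, hy', and_self, dite_true] at h
      simpa using hA.col _ _ _ (Subtype.ext h)
    · intro x hx y hy x' hx' y' hy' h h'
      simp only [hx, hy, hx', hy', and_self, dite_true] at h h'
      simpa using hA.orth _ _ _ _ (Subtype.ext h) (Subtype.ext h')
  choose A hcl hid hrow hcol horth using key
  rcases isEmpty_or_nonempty I with hI | hI
  · have hP : ∀ x y : P, x = y := fun x y => by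
      by_contra h
      obtain ⟨i, _⟩ := hex x y h
      exact hI.elim i
    exact ⟨fun x _ => x, fun _ _ _ _ => hP _ _, fun _ _ _ _ => hP _ _,
      fun _ _ _ _ _ _ => ⟨hP _ _, hP _ _⟩⟩
  choose! b hb1 hb2 using hex
  have bs : ∀ x y, x ≠ y → b x y = b y x := fun x y h =>
    huniq x y h _ _ (hb1 x y h) (hb2 x y h) (hb2 y x h.symm) (hb1 y x h.symm)
  let M : P → P → P := fun x y => if x = y then x else A (b x y) x y
  have Mid : ∀ x, M x x = x := fun x => by simp [M]
  have Mne : ∀ x y, x ≠ y → M x y = A (b x y) x y := fun x y h => by simp [M, h]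
  have Mne' : ∀ x y, x ≠ y → M y x = A (b x y) y x := fun x y h => by
    rw [Mne _ _ h.symm, bs x y h]
  have Mb : ∀ x y, x ≠ y → M x y ∈ B (b x y) := fun x y h => by
    rw [Mne _ _ h]; exact hcl _ _ (hb1 x y h) _ (hb2 x y h)
  have Mb' : ∀ x y, x ≠ y → M y x ∈ B (b x y) := fun x y h => by
    rw [bs x y h]; exact Mb _ _ h.symm
  have nex : ∀ x y, x ≠ y → M x y ≠ x := fun x y h e => by
    rw [Mne _ _ h] at e
    exact h (hrow _ x (hb1 x y h) y (hb2 x y h) x (hb1 x y h)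
      (e.trans (hid _ x (hb1 x y h)).symm)).symm
  have ney : ∀ x y, x ≠ y → M x y ≠ y := fun x y h e => by
    rw [Mne _ _ h] at e
    exact h (hcol _ x (hb1 x y h) y (hb2 x y h) y (hb2 x y h)
      (e.trans (hid _ y (hb2 x y h)).symm))
  have nsym : ∀ x y, x ≠ y → M x y ≠ M y x := fun x y h e => by
    have hz := Mb x y h
    have e1 := Mne _ _ h
    have e2 := Mne' _ _ h
    have := horth _ x (hb1 x y h) y (hb2 x y h) _ hz _ hz
      (e1.symm.trans (hid _ _ hz).symm) ((e2.symm.trans e.symm).trans (hid _ _ hz).symm)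
    exact h (this.1.trans this.2.symm)
  refine ⟨M, ?_, ?_, ?_⟩
  · intro x y y' h
    by_cases hy : x = y
    · subst hy
      by_contra hy'
      rw [Mid] at h
      exact nex _ _ hy' h.symm
    by_cases hy' : x = y'
    · subst hy'
      rw [Mid] at h
      exact absurd h (nex _ _ hy)
    have hb : b x y = b x y' := huniq x (M x y) (nex _ _ hy).symm _ _ (hb1 _ _ hy) (Mb _ _ hy)
      (hb1 _ _ hy') (h ▸ Mb _ _ hy')
    rw [Mne _ _ hy, Mne _ _ hy', ← hb] at h
    exact hrow _ _ (hb1 _ _ hy) _ (hb2 _ _ hy) _ (hb ▸ hb2 _ _ hy') h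
  · intro x x' y h
    by_cases hy : x = y
    · subst hy
      by_contra hy'
      rw [Mid] at h
      exact ney _ _ (Ne.symm hy') h.symm
    by_cases hy' : x' = y
    · subst hy'
      rw [Mid] at h
      exact absurd h (ney _ _ hy)
    have hb : b x y = b x' y := huniq y (M x y) (ney _ _ hy).symm _ _ (hb2 _ _ hy) (Mb _ _ hy)
      (hb2 _ _ hy') (h ▸ Mb _ _ hy')
    rw [Mne _ _ hy, Mne _ _ hy', ← hb] at h
    exact hcol _ _ (hb1 _ _ hy) _ (hb ▸ hb1 _ _ hy') _ (hb2 _ _ hy) h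
  · intro x y x' y' h h'
    by_cases hy : x = y
    · subst hy
      by_cases hy' : x' = y'
      · subst hy'
        rw [Mid, Mid] at h
        exact ⟨h, h⟩
      · exact absurd (h.symm.trans h') (nsym _ _ hy')
    by_cases hy' : x' = y'
    · subst hy'
      exact absurd (h.trans h'.symm) (nsym _ _ hy)
    have hb : b x y = b x' y' := huniq (M x y) (M y x) (nsym _ _ hy) _ _ (Mb _ _ hy) (Mb' _ _ hy)
      (h ▸ Mb _ _ hy') (h' ▸ Mb' _ _ hy')
    rw [Mne _ _ hy, Mne _ _ hy', ← hb] at h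
    rw [Mne' _ _ hy, Mne' _ _ hy', ← hb] at h'
    exact horth _ _ (hb1 _ _ hy) _ (hb2 _ _ hy) _ (hb ▸ hb1 _ _ hy') _ (hb ▸ hb2 _ _ hy') h h'

theorem HasSO.prod {α β : Type} (h : HasSO α) (h' : HasSO β) : HasSO (α × β) := by
  obtain ⟨A, hA⟩ := h
  obtain ⟨B, hB⟩ := h'
  refine ⟨fun x y => (A x.1 y.1, B x.2 y.2), ?_, ?_, ?_⟩
  · rintro ⟨x1, x2⟩ ⟨y1, y2⟩ ⟨z1, z2⟩ h
    simp only [Prod.mk.injEq] at h ⊢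
    exact ⟨hA.row _ _ _ h.1, hB.row _ _ _ h.2⟩
  · rintro ⟨x1, x2⟩ ⟨y1, y2⟩ ⟨z1, z2⟩ h
    simp only [Prod.mk.injEq] at h ⊢
    exact ⟨hA.col _ _ _ h.1, hB.col _ _ _ h.2⟩
  · rintro ⟨x1, x2⟩ ⟨y1, y2⟩ ⟨z1, z2⟩ ⟨w1, w2⟩ h h'
    simp only [Prod.mk.injEq] at h h' ⊢
    have h1 := hA.orth _ _ _ _ h.1 h'.1
    have h2 := hB.orth _ _ _ _ h.2 h'.2
    exact ⟨⟨h1.1, h2.1⟩, h1.2, h2.2⟩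

/-- There is a self-orthogonal Latin square of order `n`. -/
def SOrd (n : ℕ) : Prop := HasSO (Fin n)

theorem SOrd.of {α : Type} [Finite α] {n : ℕ} (hn : Nat.card α = n) (h : HasSO α) : SOrd n :=
  h.equiv ((Finite.equivFin α).trans (finCongr hn))

theorem SOrd.to {α : Type} [Finite α] {n : ℕ} (hn : Nat.card α = n) (h : SOrd n) : HasSO α :=
  HasSO.equiv ((Finite.equivFin α).trans (finCongr hn)).symm h

theorem SOrd.mul {m n : ℕ} (h : SOrd m) (h' : SOrd n) : SOrd (m * n) :=
  SOrd.of (by simp) (HasSO.prod h h')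

/-- Orders coprime to six: `2 x - y` modulo `m`. -/
theorem SOrd.coprime {m : ℕ} (hm : m.Coprime 6) : SOrd m := by
  have hm0 : m ≠ 0 := by rintro rfl; simp at hm
  have : NeZero m := ⟨hm0⟩
  have h2 : IsUnit (2 : ZMod m) := by
    have := (ZMod.isUnit_iff_coprime 2 m).2
      (Nat.Coprime.coprime_dvd_right (by norm_num) hm).symm
    exact_mod_cast this
  have h3 : IsUnit (3 : ZMod m) := by
    have := (ZMod.isUnit_iff_coprime 3 m).2
      (Nat.Coprime.coprime_dvd_right (by norm_num) hm).symm
    exact_mod_cast this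
  refine SOrd.of (α := ZMod m) (by simp) ⟨fun x y => 2 * x - y, ?_, ?_, ?_⟩
  · intro x y y' h
    simpa using h
  · intro x x' y h
    exact h2.mul_left_cancel (by linear_combination h)
  · intro x y x' y' h h'
    constructor
    · exact h3.mul_left_cancel (by linear_combination 2 * h + h')
    · exact h3.mul_left_cancel (by linear_combination h + 2 * h')

/-- Truncated transversal design `TD(5, m)`, last group truncated to `t` points. -/
theorem SOrd.td {m t : ℕ} (hm : m.Coprime 6) (ht : t ≤ m) (s4 : SOrd 4) (s5 : SOrd 5)
    (st : SOrd t) : SOrd (4 * m + t) := by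
  have hm0 : m ≠ 0 := by rintro rfl; simp at hm
  have : NeZero m := ⟨hm0⟩
  have h2 : IsUnit (2 : ZMod m) := by
    have := (ZMod.isUnit_iff_coprime 2 m).2
      (Nat.Coprime.coprime_dvd_right (by norm_num) hm).symm
    exact_mod_cast this
  have h3 : IsUnit (3 : ZMod m) := by
    have := (ZMod.isUnit_iff_coprime 3 m).2
      (Nat.Coprime.coprime_dvd_right (by norm_num) hm).symm
    exact_mod_cast this
  let c : Fin 4 → ZMod m := ![0, 1, 2, 3]
  have hc : ∀ j j', j ≠ j' → IsUnit (c j - c j') := by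
    have e0 : ∀ u : ZMod m, IsUnit (-u) ↔ IsUnit u := fun u => IsUnit.neg_iff u
    have g1 : IsUnit (1 : ZMod m) := isUnit_one
    intro j j' h
    fin_cases j <;> fin_cases j' <;> first | exact absurd rfl h | skip
    all_goals simp [c]
    all_goals first
      | exact h2
      | exact h3
      | (convert g1 using 1; ring1)
      | (convert h2 using 1; ring1)
      | (convert h3 using 1; ring1)
      | (convert g1.neg using 1; ring1)
      | (convert h2.neg using 1; ring1)
      | (convert h3.neg using 1; ring1)
  let ι : Fin t → ZMod m := fun x => ((x : ℕ) : ZMod m)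
  have hι : Function.Injective ι := by
    intro x y h
    have := (ZMod.natCast_eq_natCast_iff' _ _ _).1 h
    rw [Nat.mod_eq_of_lt (by omega), Nat.mod_eq_of_lt (by omega)] at this
    exact Fin.ext this
  let blk : (ZMod m × ZMod m) ⊕ Option (Fin 4) → Set ((Fin 4 × ZMod m) ⊕ Fin t) := fun i => match i with
    | Sum.inl (b, s) => {p | match p with
        | Sum.inl (j, x) => x = b + c j * s
        | Sum.inr z => ι z = s}
    | Sum.inr (some j) => {p | match p with
        | Sum.inl (j', _) => j' = j
        | Sum.inr _ => False}
    | Sum.inr none => {p | match p with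
        | Sum.inl _ => False
        | Sum.inr _ => True}
  refine SOrd.of (α := (Fin 4 × ZMod m) ⊕ Fin t) (by simp) (HasSO.pbd blk ?_ ?_ ?_)
  · rintro (⟨j, x⟩ | z) (⟨j', x'⟩ | z') hne
    · by_cases hj : j = j'
      · subst hj
        exact ⟨Sum.inr (some j), rfl, rfl⟩
      · obtain ⟨u, hu⟩ := hc j j' hj
        have hui : (c j - c j') * (↑u⁻¹ : ZMod m) = 1 := by rw [← hu]; simp
        refine ⟨Sum.inl (x - c j * (↑u⁻¹ * (x - x')), ↑u⁻¹ * (x - x')), ?_, ?_⟩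
        · show x = x - c j * (↑u⁻¹ * (x - x')) + c j * (↑u⁻¹ * (x - x'))
          ring
        · show x' = x - c j * (↑u⁻¹ * (x - x')) + c j' * (↑u⁻¹ * (x - x'))
          linear_combination (x - x') * hui
    · refine ⟨Sum.inl (x - c j * ι z', ι z'), ?_, rfl⟩
      show x = x - c j * ι z' + c j * ι z'
      ring
    · refine ⟨Sum.inl (x' - c j' * ι z, ι z), rfl, ?_⟩
      show x' = x' - c j' * ι z + c j' * ι z
      ring
    · exact ⟨Sum.inr none, trivial, trivial⟩
  · rintro (⟨j, x⟩ | z) (⟨j', x'⟩ | z') hne (⟨b, s⟩ | _ | i) (⟨b', s'⟩ | _ | i') h1 h2 h3 h4 <;>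
      simp only [blk, Set.mem_ofPred_eq] at h1 h2 h3 h4
    · by_cases hj : j = j'
      · subst hj
        exact absurd (by rw [h1, h2]) hne
      · have hs : s = s' := (hc j j' hj).mul_left_cancel (by
          linear_combination h2 + h3 - h1 - h4)
        subst hs
        have : b = b' := by linear_combination h3 - h1
        rw [this]
    · subst h3 h4
      exact absurd (by rw [h1, h2]) hne
    · subst h1 h2
      exact absurd (by rw [h3, h4]) hne
    · subst h1 h3; rfl
    · subst h2 h4
      have : b = b' := by linear_combination h3 - h1
      rw [this]
    · subst h1 h3
      have : b = b' := by linear_combination h4 - h2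
      rw [this]
    · exact absurd (by rw [hι (h1.trans h2.symm)]) hne
    · exact absurd (by rw [hι (h1.trans h2.symm)]) hne
    · exact absurd (by rw [hι (h3.trans h4.symm)]) hne
    · rfl
  · rintro (⟨b, s⟩ | _ | i)
    · by_cases hs : ∃ z, ι z = s
      · obtain ⟨z, rfl⟩ := hs
        refine HasSO.equiv ?_ (SOrd.to (α := Option (Fin 4)) (by simp) s5)
        refine (Equiv.ofInjective (fun o : Option (Fin 4) => (match o with
          | none => Sum.inr z
          | some j => Sum.inl (j, b + c j * ι z) : (Fin 4 × ZMod m) ⊕ Fin t)) ?_).trans (Equiv.setCongr ?_)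
        · rintro (_ | j) (_ | j') h <;> simp at h ⊢
          exact h.1
        · ext (⟨j, x⟩ | z')
          · constructor
            · rintro ⟨_ | j', h⟩ <;> simp at h
              obtain ⟨rfl, rfl⟩ := h
              rfl
            · intro h
              exact ⟨some j, by change x = _ at h; simp [h]⟩
          · constructor
            · rintro ⟨_ | j', h⟩ <;> simp at h
              subst h
              rfl
            · intro h
              exact ⟨none, by rw [hι h]⟩
      · refine HasSO.equiv ?_ s4
        refine (Equiv.ofInjective (fun j : Fin 4 => (Sum.inl (j, b + c j * s) : (Fin 4 × ZMod m) ⊕ Fin t)) ?_).trans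
          (Equiv.setCongr ?_)
        · intro j j' h
          simp at h
          exact h.1
        · ext (⟨j, x⟩ | z')
          · constructor
            · rintro ⟨j', h⟩
              simp at h
              obtain ⟨rfl, rfl⟩ := h
              rfl
            · intro h
              exact ⟨j, by change x = _ at h; simp [h]⟩
          · constructor
            · rintro ⟨j', h⟩
              simp at h
            · intro h
              exact absurd ⟨z', h⟩ hs
    · refine HasSO.equiv ?_ st
      refine (Equiv.ofInjective (fun z : Fin t => (Sum.inr z : (Fin 4 × ZMod m) ⊕ Fin t)) Sum.inr_injective).trans
          (Equiv.setCongr ?_)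
      ext (⟨j, x⟩ | z')
      · exact ⟨fun ⟨z, h⟩ => by simp at h, fun h => h.elim⟩
      · exact ⟨fun _ => trivial, fun _ => ⟨z', rfl⟩⟩
    · refine HasSO.equiv ?_ (SOrd.to (α := ZMod m) (by simp) (SOrd.coprime hm))
      refine (Equiv.ofInjective (fun x : ZMod m => (Sum.inl (i, x) : (Fin 4 × ZMod m) ⊕ Fin t)) ?_).trans
          (Equiv.setCongr ?_)
      · intro x y h
        simpa using h
      ext (⟨j, x⟩ | z')
      · constructor
        · rintro ⟨y, h⟩
          simp only [Sum.inl.injEq, Prod.mk.injEq] at h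
          exact h.1.symm
        · intro h
          change j = i at h
          exact ⟨x, by rw [h]⟩
      · exact ⟨fun ⟨z, h⟩ => by simp at h, fun h => h.elim⟩

/-- Cyclic construction with a hole: the square on `G ⊕ E` with
`A i j = i + L (j - i)` or an infinite point `I (j - i)`. -/
theorem HasSO.cyc {G E : Type} [AddCommGroup G] (L : G → G) (I : G → Option E) (a b : E → G)
    (hE : HasSO E)
    (r1 : ∀ d d', I d = none → I d' = none → L d = L d' → d = d')
    (r2 : ∀ d d', I d ≠ none → I d = I d' → d = d')
    (r3 : ∀ d e, I d = none → L d ≠ b e)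
    (r4 : ∀ e e', b e = b e' → e = e')
    (c1 : ∀ d d', I d = none → I d' = none → L d - d = L d' - d' → d = d')
    (c3 : ∀ d e, I d = none → L d - d ≠ a e)
    (c4 : ∀ e e', a e = a e' → e = e')
    (o1 : ∀ d, I d ≠ none → I (-d) = none)
    (o2 : ∀ d d', I d = none → I (-d) = none → I d' = none → I (-d') = none →
      d + L (-d) - L d = d' + L (-d') - L d' → d = d')
    (o3 : ∀ d e, I d = none → I (-d) = none → d + L (-d) - L d ≠ b e - a e)
    (o4 : ∀ e e', b e - a e = b e' - a e' → e = e')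
    (o5 : ∀ e e', b e - a e ≠ a e' - b e') : HasSO (G ⊕ E) := by
  obtain ⟨C, hC⟩ := hE
  have o3' : ∀ d e, I d = none → I (-d) = none → d + L (-d) - L d ≠ a e - b e := by
    intro d e h h' h''
    refine o3 (-d) e h' (by simpa using h) ?_
    rw [neg_neg, ← neg_sub (a e), ← h'']
    abel
  let F : G → G → G ⊕ E := fun i d => match I d with
    | none => Sum.inl (i + L d)
    | some e => Sum.inr e
  have F0 : ∀ i d, I d = none → F i d = Sum.inl (i + L d) := fun i d h => by simp [F, h]
  have F1 : ∀ i d e, I d = some e → F i d = Sum.inr e := fun i d e h => by simp [F, h]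
  let A : G ⊕ E → G ⊕ E → G ⊕ E := fun x y => match x, y with
    | Sum.inl i, Sum.inl j => F i (j - i)
    | Sum.inl i, Sum.inr e => Sum.inl (i + b e)
    | Sum.inr e, Sum.inl i => Sum.inl (i + a e)
    | Sum.inr e, Sum.inr e' => Sum.inr (C e e')
  have All : ∀ i j, A (Sum.inl i) (Sum.inl j) = F i (j - i) := fun _ _ => rfl
  have Alr : ∀ i e, A (Sum.inl i) (Sum.inr e) = Sum.inl (i + b e) := fun _ _ => rfl
  have Arl : ∀ i e, A (Sum.inr e) (Sum.inl i) = Sum.inl (i + a e) := fun _ _ => rfl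
  have Arr : ∀ i e, A (Sum.inr e) (Sum.inr i) = Sum.inr (C e i) := fun _ _ => rfl
  -- mixed comparisons for a finite cell against a border cell
  have mix : ∀ i j k e, F i (j - i) = Sum.inl (k + b e) → F j (i - j) = Sum.inl (k + a e) →
      False := by
    intro i j k e h h'
    rw [← neg_sub] at h'
    rcases h1 : I (j - i) with _ | u
    · rcases h2 : I (-(j - i)) with _ | w
      · rw [F0 _ _ h1, Sum.inl.injEq] at h
        rw [F0 _ _ h2, Sum.inl.injEq] at h'
        refine o3' _ e h1 h2 ?_
        have : a e - b e = (k + a e) - (k + b e) := by abel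
        rw [this, ← h, ← h']
        abel
      · rw [F1 _ _ _ h2] at h'
        cases h'
    · rw [F1 _ _ _ h1] at h
      cases h
  have mix2 : ∀ i j e e', F i (j - i) = Sum.inr e → F j (i - j) = Sum.inr e' → False := by
    intro i j e e' h h'
    rw [← neg_sub] at h'
    rcases h1 : I (j - i) with _ | u
    · rw [F0 _ _ h1] at h
      cases h
    · have := o1 (j - i) (by simp [h1])
      rw [F0 _ _ this] at h'
      cases h'
  have swap : ∀ k k' e e', k + b e = k' + a e' → k + a e = k' + b e' → False := by
    intro k k' e e' h h'
    refine o5 e e' ?_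
    have : b e - a e = (k + b e) - (k + a e) := by abel
    rw [this, h, h']
    abel
  have same : ∀ k k' e e', k + b e = k' + b e' → k + a e = k' + a e' → k = k' ∧ e = e' := by
    intro k k' e e' h h'
    have he : e = e' := by
      refine o4 e e' ?_
      have : b e - a e = (k + b e) - (k + a e) := by abel
      rw [this, h, h']
      abel
    subst he
    exact ⟨add_right_cancel h, rfl⟩
  refine ⟨A, ?_, ?_, ?_⟩
  · rintro (i | e) (j | u) (j' | u') h
    · rw [All, All] at h
      have : j - i = j' - i := by
        rcases h1 : I (j - i) with _ | w
        · rcases h2 : I (j' - i) with _ | w'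
          · rw [F0 _ _ h1, F0 _ _ h2, Sum.inl.injEq] at h
            exact r1 _ _ h1 h2 (add_left_cancel h)
          · rw [F0 _ _ h1, F1 _ _ _ h2] at h
            cases h
        · rcases h2 : I (j' - i) with _ | w'
          · rw [F1 _ _ _ h1, F0 _ _ h2] at h
            cases h
          · rw [F1 _ _ _ h1, F1 _ _ _ h2, Sum.inr.injEq] at h
            exact r2 _ _ (by simp [h1]) (by rw [h1, h2, h])
      rw [sub_left_inj.1 this]
    · rw [All, Alr] at h
      rcases h1 : I (j - i) with _ | w
      · rw [F0 _ _ h1, Sum.inl.injEq] at h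
        exact absurd (add_left_cancel h) (r3 _ _ h1)
      · rw [F1 _ _ _ h1] at h
        cases h
    · rw [All, Alr] at h
      rcases h1 : I (j' - i) with _ | w
      · rw [F0 _ _ h1, Sum.inl.injEq] at h
        exact absurd (add_left_cancel h).symm (r3 _ _ h1)
      · rw [F1 _ _ _ h1] at h
        cases h
    · rw [Alr, Alr, Sum.inl.injEq] at h
      rw [r4 _ _ (add_left_cancel h)]
    · rw [Arl, Arl, Sum.inl.injEq] at h
      rw [add_right_cancel h]
    · cases h
    · cases h
    · rw [Arr, Arr, Sum.inr.injEq] at h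
      rw [hC.row _ _ _ h]
  · rintro (i | e) (i' | e') (j | u) h
    · rw [All, All] at h
      have : j - i = j - i' := by
        rcases h1 : I (j - i) with _ | w
        · rcases h2 : I (j - i') with _ | w'
          · rw [F0 _ _ h1, F0 _ _ h2, Sum.inl.injEq] at h
            refine c1 _ _ h1 h2 ?_
            have : L (j - i) - (j - i) = (i + L (j - i)) - j := by abel
            rw [this, h]
            abel
          · rw [F0 _ _ h1, F1 _ _ _ h2] at h
            cases h
        · rcases h2 : I (j - i') with _ | w'
          · rw [F1 _ _ _ h1, F0 _ _ h2] at h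
            cases h
          · rw [F1 _ _ _ h1, F1 _ _ _ h2, Sum.inr.injEq] at h
            exact r2 _ _ (by simp [h1]) (by rw [h1, h2, h])
      rw [sub_right_inj.1 this]
    · rw [Alr, Alr, Sum.inl.injEq] at h
      rw [add_right_cancel h]
    · rw [All, Arl] at h
      rcases h1 : I (j - i) with _ | w
      · rw [F0 _ _ h1, Sum.inl.injEq] at h
        refine absurd ?_ (c3 _ e' h1)
        have : L (j - i) - (j - i) = (i + L (j - i)) - j := by abel
        rw [this, h]
        abel
      · rw [F1 _ _ _ h1] at h
        cases h
    · cases h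
    · rw [All, Arl] at h
      rcases h1 : I (j - i') with _ | w
      · rw [F0 _ _ h1, Sum.inl.injEq] at h
        refine absurd ?_ (c3 _ e h1)
        have : L (j - i') - (j - i') = (i' + L (j - i')) - j := by abel
        rw [this, ← h]
        abel
      · rw [F1 _ _ _ h1] at h
        cases h
    · cases h
    · rw [Arl, Arl, Sum.inl.injEq] at h
      rw [c4 _ _ (add_left_cancel h)]
    · rw [Arr, Arr, Sum.inr.injEq] at h
      rw [hC.col _ _ _ h]
  · rintro (i | e) (j | u) (i' | e') (j' | u') h h' <;>
      simp only [All, Alr, Arl, Arr] at h h'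
    · have hd : j - i = j' - i' := by
        have hn : i - j = -(j - i) := by abel
        have hn' : i' - j' = -(j' - i') := by abel
        rw [hn, hn'] at h'
        rcases h1 : I (j - i) with _ | w
        · rcases h2 : I (j' - i') with _ | w'
          · rw [F0 _ _ h1, F0 _ _ h2, Sum.inl.injEq] at h
            rcases h3 : I (-(j - i)) with _ | w3
            · rcases h4 : I (-(j' - i')) with _ | w4
              · rw [F0 _ _ h3, F0 _ _ h4, Sum.inl.injEq] at h'
                refine o2 _ _ h1 h3 h2 h4 ?_
                have : j - i + L (-(j - i)) - L (j - i) =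
                    (j + L (-(j - i))) - (i + L (j - i)) := by abel
                rw [this, h, h']
                abel
              · rw [F0 _ _ h3, F1 _ _ _ h4] at h'
                cases h'
            · rcases h4 : I (-(j' - i')) with _ | w4
              · rw [F1 _ _ _ h3, F0 _ _ h4] at h'
                cases h'
              · rw [F1 _ _ _ h3, F1 _ _ _ h4, Sum.inr.injEq] at h'
                exact neg_injective (r2 _ _ (by rw [h3]; simp) (by rw [h3, h4, h']))
          · rw [F0 _ _ h1, F1 _ _ _ h2] at h
            cases h
        · rcases h2 : I (j' - i') with _ | w'
          · rw [F1 _ _ _ h1, F0 _ _ h2] at h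
            cases h
          · rw [F1 _ _ _ h1, F1 _ _ _ h2, Sum.inr.injEq] at h
            exact r2 _ _ (by simp [h1]) (by rw [h1, h2, h])
      have hi : i = i' := by
        rcases h1 : I (j - i) with _ | w
        · rw [← hd, F0 _ _ h1, F0 _ _ h1, Sum.inl.injEq] at h
          exact add_right_cancel h
        · have h2 := o1 _ (show I (j - i) ≠ none by simp [h1])
          rw [← neg_sub j i, ← neg_sub j' i', ← hd, F0 _ _ h2, F0 _ _ h2, Sum.inl.injEq] at h'
          have := add_right_cancel h'
          subst this
          exact sub_right_inj.1 hd
      subst hi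
      rw [sub_left_inj.1 hd]
      exact ⟨rfl, rfl⟩
    · exact (mix _ _ _ _ h h').elim
    · exact (mix _ _ _ _ h' h).elim
    · exact (mix2 _ _ _ _ h h').elim
    · exact (mix _ _ _ _ h.symm h'.symm).elim
    · rw [Sum.inl.injEq] at h h'
      have := same _ _ _ _ h h'
      rw [this.1, this.2]
      exact ⟨rfl, rfl⟩
    · rw [Sum.inl.injEq] at h h'
      exact (swap _ _ _ _ h h').elim
    · cases h
    · exact (mix _ _ _ _ h'.symm h.symm).elim
    · rw [Sum.inl.injEq] at h h'
      exact (swap _ _ _ _ h' h).elim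
    · rw [Sum.inl.injEq] at h h'
      have := same _ _ _ _ h' h
      rw [this.1, this.2]
      exact ⟨rfl, rfl⟩
    · cases h
    · exact (mix2 _ _ _ _ h.symm h'.symm).elim
    · cases h
    · cases h
    · rw [Sum.inr.injEq] at h h'
      have := hC.orth _ _ _ _ h h'
      rw [this.1, this.2]
      exact ⟨rfl, rfl⟩

/-- Finite part of the table `T`: entries below `g`. -/
def tabL (g : ℕ) (T : List ℕ) (d : ZMod g) : ZMod g := ((T.getD d.val 0 : ℕ) : ZMod g)

/-- Infinite part of the table `T`: an entry `g + e` with `e < k` encodes the infinite point `e`. -/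
def tabI (g k : ℕ) (T : List ℕ) (d : ZMod g) : Option (Fin k) :=
  if h : g ≤ T.getD d.val 0 ∧ T.getD d.val 0 - g < k then some ⟨T.getD d.val 0 - g, h.2⟩ else none

/-- The decidable conditions of `HasSO.cyc` for tables; `R`, `C`, `O`, `D` are inverse tables
which witness the injectivity conditions. -/
def TabOK (g k : ℕ) (T a b R C O D : List ℕ) : Prop :=
    (∀ d : ZMod g, tabI g k T d = none → R.getD (tabL g T d).val 0 = d.val) ∧
    (∀ d : ZMod g, tabI g k T d ≠ none → D.getD (T.getD d.val 0 - g) 0 = d.val) ∧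
    (∀ (d : ZMod g) (e : Fin k), tabI g k T d = none → tabL g T d ≠ ((b.getD e 0 : ℕ) : ZMod g)) ∧
    (∀ e e' : Fin k, ((b.getD e 0 : ℕ) : ZMod g) = ((b.getD e' 0 : ℕ) : ZMod g) → e = e') ∧
    (∀ d : ZMod g, tabI g k T d = none → C.getD (tabL g T d - d).val 0 = d.val) ∧
    (∀ (d : ZMod g) (e : Fin k), tabI g k T d = none →
      tabL g T d - d ≠ ((a.getD e 0 : ℕ) : ZMod g)) ∧
    (∀ e e' : Fin k, ((a.getD e 0 : ℕ) : ZMod g) = ((a.getD e' 0 : ℕ) : ZMod g) → e = e') ∧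
    (∀ d : ZMod g, tabI g k T d ≠ none → tabI g k T (-d) = none) ∧
    (∀ d : ZMod g, tabI g k T d = none → tabI g k T (-d) = none →
      O.getD (d + tabL g T (-d) - tabL g T d).val 0 = d.val) ∧
    (∀ (d : ZMod g) (e : Fin k), tabI g k T d = none → tabI g k T (-d) = none →
      d + tabL g T (-d) - tabL g T d ≠
        ((b.getD e 0 : ℕ) : ZMod g) - ((a.getD e 0 : ℕ) : ZMod g)) ∧
    (∀ e e' : Fin k, ((b.getD e 0 : ℕ) : ZMod g) - ((a.getD e 0 : ℕ) : ZMod g) =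
      ((b.getD e' 0 : ℕ) : ZMod g) - ((a.getD e' 0 : ℕ) : ZMod g) → e = e') ∧
    (∀ e e' : Fin k, ((b.getD e 0 : ℕ) : ZMod g) - ((a.getD e 0 : ℕ) : ZMod g) ≠
      ((a.getD e' 0 : ℕ) : ZMod g) - ((b.getD e' 0 : ℕ) : ZMod g))

set_option synthInstance.maxHeartbeats 400000 in
set_option synthInstance.maxSize 4000 in
instance (g k : ℕ) [NeZero g] (T a b R C O D : List ℕ) : Decidable (TabOK g k T a b R C O D) := by
  unfold TabOK
  infer_instance

theorem tabI_eq {g k : ℕ} {T : List ℕ} {d d' : ZMod g} (h : tabI g k T d ≠ none)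
    (h' : tabI g k T d = tabI g k T d') : T.getD d.val 0 - g = T.getD d'.val 0 - g := by
  have h'' : tabI g k T d' ≠ none := h' ▸ h
  unfold tabI at h h' h''
  split_ifs at h h' h'' with h1 h2
  · simpa using h'
  · exact absurd rfl h''
  all_goals exact absurd rfl h

theorem SOrd.tab (g k : ℕ) [NeZero g] (T a b R C O D : List ℕ) (hk : SOrd k)
    (h : TabOK g k T a b R C O D) : SOrd (g + k) := by
  obtain ⟨h1, h2, h3, h4, h5, h6, h7, h8, h9, h10, h11, h12⟩ := h
  refine SOrd.of (α := ZMod g ⊕ Fin k) (by simp)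
    (HasSO.cyc (tabL g T) (tabI g k T) (fun e => ((a.getD e 0 : ℕ) : ZMod g))
      (fun e => ((b.getD e 0 : ℕ) : ZMod g)) hk ?_ ?_ h3 h4 ?_ h6 h7 h8 ?_ h10 h11 h12)
  · intro d d' hd hd' e
    exact ZMod.val_injective g (by rw [← h1 d hd, ← h1 d' hd', e])
  · intro d d' hd e
    exact ZMod.val_injective g (by rw [← h2 d hd, ← h2 d' (e ▸ hd), tabI_eq hd e])
  · intro d d' hd hd' e
    exact ZMod.val_injective g (by rw [← h5 d hd, ← h5 d' hd', e])
  · intro d d' hd hn hd' hn' e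
    exact ZMod.val_injective g (by rw [← h9 d hd hn, ← h9 d' hd' hn', e])

theorem SOrd.zero : SOrd 0 := ⟨fun x _ => x, fun x => x.elim0, fun x => x.elim0, fun x => x.elim0⟩

theorem SOrd.one : SOrd 1 := SOrd.coprime (by norm_num)

theorem sord_4 : SOrd 4 :=
  SOrd.tab 3 1 [0, 2, 3] [2] [1] [0, 0, 1] [0, 1, 0] [0, 0, 0] [2] SOrd.one
    (by decide +kernel)

theorem sord_8 : SOrd 8 :=
  SOrd.tab 7 1 [0, 4, 3, 1, 7, 2, 5] [2] [6] [0, 3, 5, 2, 1, 6, 0] [0, 2, 0, 1, 5, 3, 6] [0, 2, 1,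
    0, 0, 6, 5] [4] SOrd.one
    (by decide +kernel)

theorem sord_9 : SOrd 9 :=
  SOrd.tab 8 1 [0, 2, 1, 5, 7, 8, 4, 3] [5] [6] [0, 2, 1, 7, 6, 3, 0, 4] [0, 1, 3, 4, 7, 0, 6, 2]
    [0, 0, 1, 6, 4, 2, 7, 0] [5] SOrd.one
    (by decide +kernel)

theorem sord_10 : SOrd 10 :=
  SOrd.tab 9 1 [0, 8, 1, 6, 5, 7, 2, 9, 3] [6] [4] [0, 2, 6, 8, 0, 4, 3, 5, 1] [0, 4, 5, 3, 8, 6,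
    0, 1, 2] [0, 6, 0, 5, 8, 1, 4, 0, 3] [7] SOrd.one
    (by decide +kernel)

theorem sord_12 : SOrd 12 :=
  SOrd.tab 11 1 [0, 3, 8, 2, 9, 6, 4, 11, 1, 5, 7] [3] [10] [0, 8, 3, 1, 6, 9, 5, 10, 2, 4, 0] [0,
    5, 1, 0, 8, 4, 2, 9, 10, 6, 3] [0, 9, 3, 5, 0, 1, 10, 0, 6, 8, 2] [7] SOrd.one
    (by decide +kernel)

theorem sord_14 : SOrd 14 :=
  SOrd.tab 13 1 [0, 4, 7, 5, 11, 2, 1, 13, 12, 10, 3, 9, 8] [12] [6] [0, 6, 5, 10, 1, 3, 0, 2, 12,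
    11, 9, 4, 8] [0, 9, 3, 1, 8, 2, 10, 4, 6, 12, 5, 11, 0] [0, 3, 5, 4, 2, 1, 0, 0, 12, 11, 9, 8,
    10] [7] SOrd.one
    (by decide +kernel)

theorem sord_15 : SOrd 15 :=
  SOrd.tab 15 0 [0, 9, 14, 1, 5, 12, 8, 11, 7, 3, 13, 6, 2, 4, 10] [] [] [0, 3, 12, 9, 13, 4, 11,
    8, 6, 1, 14, 7, 5, 10, 2] [0, 4, 6, 10, 7, 12, 13, 5, 1, 9, 11, 14, 2, 3, 8] [0, 6, 1, 7, 3,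
    4, 5, 2, 13, 10, 11, 12, 8, 14, 9] [] SOrd.zero
    (by decide +kernel)

theorem sord_18 : SOrd 18 :=
  SOrd.tab 17 1 [0, 3, 14, 8, 13, 15, 7, 11, 2, 16, 6, 10, 9, 17, 12, 1, 5] [8] [4] [0, 15, 8, 1,
    0, 16, 10, 6, 3, 12, 11, 7, 14, 4, 2, 5, 9] [0, 6, 1, 15, 7, 3, 16, 9, 0, 4, 5, 8, 2, 10, 12,
    14, 11] [0, 12, 7, 1, 0, 8, 2, 3, 11, 6, 14, 15, 9, 0, 16, 10, 5] [13] SOrd.one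
    (by decide +kernel)

theorem sord_22 : SOrd 22 :=
  SOrd.tab 21 1 [0, 5, 4, 9, 20, 18, 16, 6, 17, 7, 1, 19, 15, 21, 8, 12, 2, 13, 11, 3, 10] [1]
    [14] [0, 10, 16, 19, 2, 1, 7, 9, 14, 3, 20, 18, 15, 17, 0, 12, 6, 8, 5, 11, 4] [0, 0, 2, 12,
    1, 19, 3, 16, 11, 8, 6, 20, 10, 5, 18, 14, 4, 17, 15, 9, 7] [0, 2, 6, 17, 12, 3, 1, 10, 0, 7,
    5, 16, 14, 0, 11, 20, 18, 9, 4, 15, 19] [13] SOrd.one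
    (by decide +kernel)

theorem sord_26 : SOrd 26 :=
  SOrd.tab 25 1 [0, 12, 8, 10, 24, 20, 15, 3, 5, 1, 11, 14, 22, 25, 18, 2, 9, 6, 16, 7, 19, 23,
    13, 17, 4] [8] [21] [0, 9, 15, 7, 24, 8, 17, 19, 2, 16, 3, 10, 1, 22, 11, 6, 18, 23, 14, 20,
    5, 0, 12, 21, 4] [0, 10, 21, 11, 14, 24, 2, 3, 0, 6, 12, 1, 15, 19, 17, 5, 22, 9, 16, 23, 4,
    7, 8, 18, 20] [0, 10, 19, 4, 5, 18, 3, 24, 16, 8, 14, 2, 0, 0, 23, 11, 17, 9, 1, 22, 7, 20,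
    21, 6, 15] [13] SOrd.one
    (by decide +kernel)

theorem sord_27 : SOrd 27 :=
  SOrd.tab 27 0 [0, 12, 9, 5, 13, 6, 11, 4, 3, 25, 22, 21, 2, 17, 1, 18, 24, 16, 10, 7, 26, 15, 8,
    14, 20, 23, 19] [] [] [0, 14, 12, 8, 7, 3, 5, 19, 22, 2, 18, 6, 1, 4, 23, 21, 17, 13, 15, 26,
    24, 11, 10, 25, 16, 9, 20] [0, 5, 3, 15, 13, 6, 20, 2, 16, 4, 11, 1, 10, 22, 14, 19, 9, 12,
    23, 18, 26, 21, 8, 24, 7, 25, 17] [0, 12, 7, 14, 10, 4, 18, 5, 1, 24, 6, 25, 8, 16, 11, 19, 2,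
    21, 3, 26, 22, 9, 23, 17, 13, 20, 15] [] SOrd.zero
    (by decide +kernel)

theorem sord_30 : SOrd 30 :=
  SOrd.tab 29 1 [0, 27, 7, 17, 15, 25, 22, 8, 10, 5, 19, 21, 24, 28, 12, 4, 23, 16, 13, 11, 14, 9,
    6, 26, 3, 2, 1, 20, 29] [19] [18] [0, 26, 25, 24, 15, 9, 22, 2, 7, 21, 8, 19, 14, 18, 20, 4,
    17, 3, 0, 10, 27, 11, 6, 16, 12, 5, 23, 1, 13] [0, 7, 8, 23, 26, 2, 25, 16, 24, 10, 11, 4, 12,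
    22, 3, 13, 6, 21, 15, 0, 5, 19, 27, 20, 18, 9, 1, 14, 17] [0, 0, 10, 11, 12, 7, 14, 8, 13, 25,
    6, 20, 5, 26, 27, 2, 3, 24, 9, 23, 4, 16, 21, 15, 22, 17, 18, 19, 0] [28] SOrd.one
    (by decide +kernel)

theorem sord_34 : SOrd 34 :=
  SOrd.tab 33 1 [0, 4, 27, 1, 33, 13, 7, 9, 2, 28, 3, 23, 21, 10, 30, 20, 5, 24, 22, 29, 31, 16,
    18, 8, 14, 6, 32, 26, 19, 11, 17, 15, 12] [21] [25] [0, 3, 8, 10, 1, 16, 25, 6, 23, 7, 13, 29,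
    32, 5, 24, 31, 21, 30, 22, 28, 15, 12, 18, 11, 17, 0, 27, 2, 9, 19, 14, 20, 26] [0, 6, 7, 1,
    18, 15, 26, 17, 5, 12, 19, 20, 11, 32, 25, 29, 14, 31, 23, 9, 30, 0, 16, 24, 28, 2, 10, 8, 21,
    22, 13, 3, 27] [0, 13, 16, 26, 0, 24, 11, 12, 27, 1, 31, 5, 8, 14, 30, 10, 18, 15, 23, 3, 19,
    25, 28, 2, 32, 6, 21, 22, 9, 0, 7, 17, 20] [4] SOrd.one
    (by decide +kernel)

theorem sord_38 : SOrd 38 :=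
  SOrd.tab 28 10 [0, 28, 1, 4, 2, 29, 30, 31, 18, 32, 33, 13, 24, 34, 21, 5, 22, 35, 9, 16, 12,
    14, 25, 17, 20, 36, 37, 8] [4, 5, 8, 11, 13, 14, 15, 16, 17, 23] [15, 6, 23, 27, 10, 7, 19,
    11, 26, 3] [0, 2, 4, 0, 3, 15, 0, 0, 27, 18, 0, 0, 20, 11, 21, 0, 19, 23, 8, 0, 24, 14, 16, 0,
    12, 22, 0, 0] [0, 3, 11, 22, 0, 0, 16, 14, 0, 27, 8, 0, 12, 0, 0, 0, 0, 0, 15, 18, 20, 21, 23,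
    0, 24, 19, 4, 2] [0, 0, 8, 0, 0, 0, 24, 0, 0, 0, 12, 0, 0, 0, 14, 0, 0, 0, 16, 0, 0, 0, 4, 0,
    0, 0, 20, 0] [1, 5, 6, 7, 9, 10, 13, 17, 25, 26] sord_10
    (by decide +kernel)

theorem sord_39 : SOrd 39 :=
  SOrd.tab 35 4 [0, 35, 21, 4, 17, 25, 9, 19, 12, 8, 15, 3, 34, 36, 23, 5, 22, 11, 32, 7, 30, 2,
    33, 14, 31, 20, 28, 37, 26, 38, 10, 24, 18, 6, 16] [18, 24, 31, 32] [27, 1, 29, 13] [0, 0, 21,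
    11, 3, 15, 33, 19, 9, 6, 30, 17, 8, 0, 23, 10, 34, 4, 32, 7, 25, 2, 16, 14, 31, 5, 28, 0, 26,
    0, 20, 24, 18, 22, 12] [0, 3, 26, 6, 8, 10, 16, 24, 33, 14, 20, 22, 7, 4, 18, 30, 21, 34, 0,
    2, 5, 32, 12, 19, 0, 15, 23, 11, 31, 17, 25, 0, 0, 28, 9] [0, 16, 0, 17, 11, 15, 26, 21, 23,
    0, 30, 4, 0, 33, 7, 10, 0, 3, 32, 0, 25, 28, 2, 0, 31, 5, 0, 12, 14, 9, 20, 24, 18, 0, 19] [1,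
    13, 27, 29] sord_4
    (by decide +kernel)

theorem sord_42 : SOrd 42 :=
  SOrd.tab 35 7 [0, 7, 16, 6, 12, 35, 36, 4, 21, 2, 5, 33, 24, 37, 18, 25, 23, 34, 19, 3, 38, 32,
    14, 9, 13, 39, 17, 40, 11, 28, 15, 27, 26, 31, 41] [2, 5, 9, 15, 16, 23, 25] [1, 30, 22, 20,
    8, 29, 10] [0, 0, 9, 19, 7, 10, 3, 1, 0, 23, 0, 28, 4, 24, 22, 30, 2, 26, 14, 18, 0, 8, 0, 16,
    12, 15, 32, 31, 29, 0, 0, 33, 21, 11, 17] [0, 18, 0, 3, 14, 0, 1, 16, 4, 0, 15, 21, 12, 8, 2,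
    0, 0, 17, 28, 19, 30, 23, 11, 0, 24, 0, 26, 22, 9, 32, 10, 31, 7, 33, 29] [0, 0, 17, 23, 19,
    0, 0, 21, 0, 24, 0, 26, 32, 0, 7, 0, 31, 2, 33, 4, 0, 28, 0, 3, 9, 0, 11, 0, 14, 0, 0, 16, 12,
    18, 0] [5, 6, 13, 20, 25, 27, 34] (SOrd.coprime (by norm_num))
    (by decide +kernel)

theorem sord_46 : SOrd 46 :=
  SOrd.tab 42 4 [0, 11, 26, 12, 9, 31, 10, 35, 20, 4, 18, 2, 34, 1, 7, 16, 15, 13, 41, 37, 42, 28,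
    39, 8, 40, 23, 43, 24, 44, 32, 17, 25, 38, 6, 36, 14, 5, 29, 45, 22, 30, 19] [13, 14, 19, 31]
    [33, 21, 3, 27] [0, 13, 11, 0, 9, 36, 33, 14, 23, 4, 6, 1, 3, 17, 35, 16, 15, 30, 10, 41, 8,
    0, 39, 25, 27, 31, 2, 0, 21, 37, 40, 5, 29, 0, 12, 7, 34, 19, 32, 22, 24, 18] [0, 15, 34, 29,
    6, 4, 32, 21, 10, 3, 1, 36, 8, 0, 0, 33, 24, 22, 19, 0, 41, 35, 12, 18, 2, 39, 5, 23, 7, 30,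
    13, 0, 40, 11, 37, 14, 31, 9, 17, 27, 25, 16] [0, 6, 13, 5, 0, 30, 2, 0, 31, 1, 23, 9, 32, 3,
    35, 25, 0, 18, 34, 27, 0, 21, 0, 15, 8, 24, 0, 17, 7, 39, 10, 33, 19, 41, 11, 0, 40, 12, 0,
    37, 29, 36] [20, 26, 28, 38] sord_4
    (by decide +kernel)

theorem sord_58 : SOrd 58 :=
  SOrd.tab 57 1 [0, 3, 20, 39, 13, 4, 2, 21, 36, 41, 47, 37, 55, 44, 26, 9, 51, 25, 16, 38, 31,
    45, 52, 56, 1, 10, 46, 43, 34, 12, 17, 32, 27, 30, 23, 28, 49, 29, 57, 5, 22, 11, 14, 48, 8,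
    35, 53, 50, 6, 33, 54, 42, 40, 18, 7, 15, 24] [38] [19] [0, 24, 6, 1, 5, 39, 48, 54, 44, 15,
    25, 41, 29, 4, 42, 55, 18, 30, 53, 0, 2, 7, 40, 34, 56, 17, 14, 32, 35, 37, 33, 20, 31, 49,
    28, 45, 8, 11, 19, 3, 52, 9, 51, 27, 13, 21, 26, 10, 43, 36, 47, 16, 22, 46, 50, 12, 23] [0,
    31, 1, 47, 50, 43, 28, 46, 17, 4, 54, 20, 14, 36, 7, 48, 27, 55, 2, 19, 26, 44, 53, 39, 21,
    56, 11, 41, 8, 42, 22, 13, 9, 23, 24, 16, 3, 10, 0, 40, 29, 49, 25, 12, 30, 52, 34, 45, 51,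
    37, 35, 15, 32, 6, 33, 18, 5] [0, 27, 35, 55, 33, 8, 28, 18, 45, 4, 34, 51, 26, 10, 17, 32,
    52, 50, 20, 0, 15, 43, 1, 44, 41, 21, 48, 11, 3, 54, 46, 9, 36, 16, 13, 56, 14, 42, 0, 37, 7,
    5, 25, 40, 47, 31, 6, 23, 53, 12, 39, 29, 49, 24, 2, 22, 30] [38] SOrd.one
    (by decide +kernel)

theorem sord_66 : SOrd 66 :=
  SOrd.tab 65 1 [0, 17, 41, 37, 62, 60, 52, 61, 31, 46, 55, 29, 34, 51, 43, 35, 24, 36, 19, 13,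
    30, 57, 33, 27, 16, 20, 12, 4, 54, 11, 45, 58, 39, 9, 18, 5, 14, 3, 21, 38, 15, 28, 63, 49,
    32, 50, 48, 44, 7, 1, 65, 47, 64, 56, 2, 40, 23, 6, 26, 22, 25, 59, 53, 42, 8] [25] [10] [0,
    49, 54, 37, 27, 35, 57, 48, 64, 33, 0, 29, 26, 19, 36, 40, 24, 1, 34, 18, 25, 38, 59, 56, 16,
    60, 58, 23, 41, 11, 20, 8, 44, 22, 12, 15, 17, 3, 39, 32, 55, 2, 63, 14, 47, 30, 9, 51, 46,
    43, 45, 13, 6, 62, 28, 10, 53, 21, 31, 61, 5, 7, 4, 42, 52] [0, 18, 46, 53, 23, 45, 43, 32,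
    16, 64, 20, 22, 52, 54, 57, 30, 1, 49, 11, 17, 15, 42, 12, 8, 48, 0, 28, 31, 59, 14, 60, 37,
    56, 58, 3, 35, 21, 9, 13, 2, 40, 33, 27, 36, 63, 10, 6, 29, 38, 34, 55, 26, 41, 44, 7, 5, 62,
    24, 4, 19, 25, 51, 47, 61, 39] [0, 4, 32, 2, 44, 55, 42, 49, 64, 34, 35, 46, 48, 39, 56, 0,
    54, 57, 14, 3, 25, 38, 47, 37, 59, 45, 13, 43, 58, 41, 60, 53, 29, 36, 12, 5, 24, 7, 22, 52,
    20, 6, 28, 18, 27, 40, 62, 51, 8, 11, 0, 9, 26, 17, 19, 30, 31, 1, 16, 23, 10, 21, 63, 33, 61]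
    [50] SOrd.one
    (by decide +kernel)

theorem sord_74 : SOrd 74 :=
  SOrd.tab 70 4 [0, 70, 1, 4, 2, 8, 12, 14, 3, 6, 15, 71, 16, 64, 35, 38, 34, 29, 33, 53, 65, 49,
    11, 45, 40, 68, 52, 9, 63, 66, 47, 60, 51, 44, 10, 21, 24, 57, 69, 26, 25, 50, 56, 5, 22, 58,
    54, 39, 19, 42, 27, 72, 46, 55, 20, 18, 28, 67, 13, 43, 17, 30, 36, 73, 32, 48, 62, 37, 59,
    23] [30, 49, 50, 60] [41, 7, 31, 61] [0, 2, 4, 8, 3, 43, 9, 0, 5, 27, 34, 22, 6, 58, 7, 10,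
    12, 60, 55, 48, 54, 35, 44, 69, 36, 40, 39, 50, 56, 17, 61, 0, 64, 18, 16, 14, 62, 67, 15, 47,
    24, 0, 49, 59, 33, 23, 52, 30, 65, 21, 41, 32, 26, 19, 46, 53, 42, 37, 45, 68, 31, 0, 66, 28,
    13, 20, 29, 57, 25, 38] [0, 3, 53, 5, 12, 10, 6, 7, 46, 41, 57, 33, 17, 45, 42, 18, 24, 30,
    16, 32, 37, 14, 23, 15, 69, 58, 26, 60, 21, 31, 0, 38, 43, 55, 19, 28, 54, 29, 64, 61, 67, 48,
    56, 25, 62, 20, 34, 50, 44, 0, 0, 13, 27, 65, 59, 40, 35, 39, 36, 22, 0, 68, 47, 49, 52, 8,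
    66, 9, 4, 2] [0, 0, 16, 39, 44, 55, 66, 14, 30, 12, 68, 0, 10, 29, 21, 25, 13, 23, 50, 0, 38,
    28, 36, 27, 37, 65, 6, 53, 0, 62, 22, 18, 46, 9, 67, 35, 3, 61, 24, 52, 48, 8, 0, 17, 64, 5,
    33, 43, 34, 42, 32, 0, 20, 47, 57, 45, 49, 41, 60, 0, 2, 58, 40, 56, 4, 15, 26, 31, 54, 0] [1,
    11, 51, 63] sord_4
    (by decide +kernel)

/-- The orders below 120 that are neither coprime to six nor given by `SOrd.td`. -/
def special : List ℕ :=
  [0, 4, 8, 9, 10, 12, 14, 15, 16, 18, 22, 26, 27, 30, 34, 36, 38, 39, 40, 42, 46, 50, 58, 66, 70,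
    74, 98]

theorem sord_special : ∀ n ∈ special, SOrd n := by
  intro n hn
  simp only [special, List.mem_cons, List.not_mem_nil, or_false] at hn
  have s5 : SOrd 5 := SOrd.coprime (by norm_num)
  have s7 : SOrd 7 := SOrd.coprime (by norm_num)
  rcases hn with rfl | rfl | rfl | rfl | rfl | rfl | rfl | rfl | rfl | rfl | rfl | rfl | rfl | rfl |
    rfl | rfl | rfl | rfl | rfl | rfl | rfl | rfl | rfl | rfl | rfl | rfl | rfl
  · exact SOrd.zero
  · exact sord_4
  · exact sord_8
  · exact sord_9
  · exact sord_10
  · exact sord_12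
  · exact sord_14
  · exact sord_15
  · exact SOrd.mul sord_4 sord_4
  · exact sord_18
  · exact sord_22
  · exact sord_26
  · exact sord_27
  · exact sord_30
  · exact sord_34
  · exact SOrd.mul sord_4 sord_9
  · exact sord_38
  · exact sord_39
  · exact SOrd.mul s5 sord_8
  · exact sord_42
  · exact sord_46
  · exact SOrd.mul s5 sord_10
  · exact sord_58
  · exact sord_66
  · exact SOrd.mul s7 sord_10
  · exact sord_74
  · exact SOrd.mul s7 sord_14

theorem small_cases : ∀ n < 120, n = 2 ∨ n = 3 ∨ n = 6 ∨ n ∈ special ∨ n.Coprime 6 ∨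
    ∃ m < 30, m.Coprime 6 ∧ 4 * m ≤ n ∧ n ≤ 5 * m ∧ n - 4 * m ≠ 2 ∧ n - 4 * m ≠ 3 ∧
      n - 4 * m ≠ 6 := by
  decide +kernel

theorem large_cases (n : ℕ) (hn : 120 ≤ n) :
    ∃ m, m.Coprime 6 ∧ 4 * m ≤ n ∧ n ≤ 5 * m ∧ n - 4 * m ≠ 2 ∧ n - 4 * m ≠ 3 ∧
      n - 4 * m ≠ 6 := by
  have cop : ∀ q, (6 * q + 1).Coprime 6 ∧ (6 * q + 5).Coprime 6 := by
    intro q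
    constructor
    · simp
    · rw [Nat.coprime_mul_left_add_left]
      norm_num
  by_cases h : n % 24 = 2
  · refine ⟨6 * (n / 24 - 1) + 1, (cop _).1, ?_, ?_, ?_, ?_, ?_⟩ <;> omega
  · refine ⟨6 * (n / 24 - 1) + 5, (cop _).2, ?_, ?_, ?_, ?_, ?_⟩ <;> omega

theorem sord_all (n : ℕ) : n ≠ 2 → n ≠ 3 → n ≠ 6 → SOrd n := by
  induction n using Nat.strong_induction_on with
  | _ n ih =>
    intro h2 h3 h6
    have step : (∃ m, m.Coprime 6 ∧ 4 * m ≤ n ∧ n ≤ 5 * m ∧ n - 4 * m ≠ 2 ∧ n - 4 * m ≠ 3 ∧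
        n - 4 * m ≠ 6) → SOrd n := by
      rintro ⟨m, hm, h4, h5, k2, k3, k6⟩
      have hm0 : m ≠ 0 := by rintro rfl; simp at hm
      have := SOrd.td (t := n - 4 * m) hm (by omega) sord_4 (SOrd.coprime (by norm_num))
        (ih (n - 4 * m) (by omega) k2 k3 k6)
      rwa [Nat.add_sub_cancel' h4] at this
    by_cases hn : n < 120
    · rcases small_cases n hn with h | h | h | h | h | ⟨m, -, h⟩
      · exact absurd h h2
      · exact absurd h h3
      · exact absurd h h6
      · exact sord_special n h
      · exact SOrd.coprime h
      · exact step ⟨m, h⟩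
    · exact step (large_cases n (by omega))

theorem exists_self_orthogonal (n : ℕ) (hn : 0 < n) (h2 : n ≠ 2) (h3 : n ≠ 3) (h6 : n ≠ 6) :
    ∃ A : Fin n → Fin n → Fin n,
      IsLatinSquare A ∧ IsOrthogonal A (fun i j => A j i) := by
  obtain ⟨A, hA⟩ := sord_all n h2 h3 h6
  refine ⟨A, ⟨fun i => ?_, fun j => ?_⟩, ?_⟩
  · exact Finite.injective_iff_bijective.1 (fun x y h => hA.row i x y h)
  · exact Finite.injective_iff_bijective.1 (fun x y h => hA.col x y j h)
  · have hinj : Function.Injective (fun q : Fin n × Fin n => (A q.1 q.2, A q.2 q.1)) := by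
      rintro ⟨x, y⟩ ⟨x', y'⟩ h
      simp only [Prod.mk.injEq] at h
      have := hA.orth _ _ _ _ h.1 h.2
      rw [this.1, this.2]
    exact (Finite.injective_iff_bijective.1 hinj).existsUnique
end

section
/- For any integer n ≥ 2, there do not exist two Latin squares A and B of order n with r(A, B) = n + 1, i.e., no two Latin squares of order n produce exactly n + 1 distinct ordered pairs when superimposed. -/
/-- The number of distinct ordered pairs obtained by superimposing `A` and `B`. -/
def orthCount {k n : ℕ} (A B : Fin k → Fin n → Fin n) : ℕ :=
  (Finset.univ.image fun q : Fin k × Fin n => (A q.1 q.2, B q.1 q.2)).card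

theorem no_n_add_one_orthogonal (n : ℕ) (hn : 2 ≤ n) :
    ¬ ∃ A B : Fin n → Fin n → Fin n,
        IsLatinSquare A ∧ IsLatinSquare B ∧ orthCount A B = n + 1 := by
  rintro ⟨A, B, hA, hB, h⟩
  unfold orthCount at h
  set S := Finset.univ.image fun q : Fin n × Fin n => (A q.1 q.2, B q.1 q.2) with hS
  have memS : ∀ i j, (A i j, B i j) ∈ S := fun i j =>
    Finset.mem_image.2 ⟨(i, j), Finset.mem_univ _, rfl⟩
  let z : Fin n := ⟨0, by omega⟩
  -- the pairs occurring in the first row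
  let G := Finset.univ.image fun j : Fin n => (A z j, B z j)
  have memG : ∀ x, x ∈ G ↔ ∃ j, (A z j, B z j) = x := by
    intro x
    simp [G]
  have hG : G.card = n := by
    have := Finset.card_image_of_injective (Finset.univ : Finset (Fin n))
      (f := fun j : Fin n => (A z j, B z j))
      (fun j k hjk => (hA.1 z).1 (congrArg Prod.fst hjk))
    simpa using this
  have hGS : G ⊆ S := by
    intro x hx
    obtain ⟨j, rfl⟩ := (memG x).1 hx
    exact memS z j
  have h1 : (S \ G).card = 1 := by
    rw [Finset.card_sdiff_of_subset hGS, h, hG]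
    omega
  obtain ⟨p, hp⟩ := Finset.card_eq_one.1 h1
  have hpm : p ∈ S \ G := by rw [hp]; exact Finset.mem_singleton_self p
  obtain ⟨hpS, hpG⟩ := Finset.mem_sdiff.1 hpm
  obtain ⟨⟨i, j⟩, -, hij⟩ := Finset.mem_image.1 hpS
  -- the first-row cell with the same `B`-symbol as `p`
  obtain ⟨k, hk⟩ := (hB.1 z).2 (B i j)
  obtain ⟨l, hl⟩ := (hA.1 i).2 (A z k)
  dsimp only at hij hk hl
  have hlj : l ≠ j := by
    rintro rfl
    exact hpG ((memG p).2 ⟨k, by rw [← hij, hk, hl]⟩)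
  have hlG : (A i l, B i l) ∈ G := by
    by_contra hc
    have h2 : (A i l, B i l) ∈ S \ G := Finset.mem_sdiff.2 ⟨memS i l, hc⟩
    rw [hp, Finset.mem_singleton, ← hij] at h2
    exact hlj ((hA.1 i).1 (congrArg Prod.fst h2))
  obtain ⟨m, hm⟩ := (memG _).1 hlG
  have e1 : A z m = A i l := congrArg Prod.fst hm
  have e2 : B z m = B i l := congrArg Prod.snd hm
  have hmk : m = k := (hA.1 z).1 (e1.trans hl)
  rw [hmk, hk] at e2
  exact hlj ((hB.1 i).1 e2.symm)
end
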